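/- Let 𝔽_q be a finite field with q elements of characteristic p, let A be an invertible k×k matrix over 𝔽_q, let α_1, …, α_N be the degrees of the distinct irreducible factors of the characteristic polynomial of A over 𝔽_q, and let Q be the least common multiple of q^{α_1} − 1, …, q^{α_N} − 1. Assume the multiplicity of every irreducible factor of the characteristic polynomial of A is at most p. Then A^{Qp} = I; equivalently, every solution of the linear system v_{n+1} = A v_n over 𝔽_q is Qp-periodic. -/

import Mathlib

open Polynomial UniqueFactorizationMonoid

/-!
The characteristic polynomial `χ` of `A` divides `(X ^ Q - 1) ^ p = X ^ (Q * p) - 1`, so the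
conclusion follows from Cayley–Hamilton. For the divisibility, let `f` be an irreducible factor of
`χ`, of degree `d`. Since `A` is invertible, `X ∤ χ`, so the class of `X` is a unit of the field
`F[X] / (f)` with `q ^ d` elements, whence `f ∣ X ^ (q ^ d - 1) - 1 ∣ X ^ Q - 1`. As `f` occurs in
`χ` at most `p` times, comparing multiplicities gives `χ ∣ (X ^ Q - 1) ^ p`.
-/

lemma irreducible_dvd_X_pow_sub_one {F : Type*} [Field F] [Fintype F] {f : F[X]}
    (hf : Irreducible f) (hX : ¬ X ∣ f) :
    f ∣ X ^ (Fintype.card F ^ f.natDegree - 1) - 1 := by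
  have : Fact (Irreducible f) := ⟨hf⟩
  have : Module.Finite F (AdjoinRoot f) := (AdjoinRoot.powerBasis hf.ne_zero).finite
  have : Finite (AdjoinRoot f) := Module.finite_of_finite F
  have : Fintype (AdjoinRoot f) := Fintype.ofFinite _
  have hcard : Fintype.card (AdjoinRoot f) = Fintype.card F ^ f.natDegree := by
    rw [Module.card_eq_pow_finrank (K := F), (AdjoinRoot.powerBasis hf.ne_zero).finrank,
      AdjoinRoot.powerBasis_dim]
  have hroot : AdjoinRoot.root f ≠ 0 := by
    intro h
    have h1 : f ∣ X := by
      rw [← AdjoinRoot.mk_eq_zero, AdjoinRoot.mk_X, h]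
    exact hX ((hf.dvd_symm irreducible_X) h1)
  rw [← AdjoinRoot.mk_eq_zero, map_sub, map_pow, map_one, AdjoinRoot.mk_X, ← hcard,
    FiniteField.pow_card_sub_one_eq_one _ hroot, sub_self]

lemma not_X_dvd_charpoly {F : Type*} [Field F] {k : ℕ} {A : Matrix (Fin k) (Fin k) F}
    (hA : IsUnit A) : ¬ X ∣ A.charpoly := by
  rw [X_dvd_iff]
  intro h
  have hdet := (Matrix.isUnit_iff_isUnit_det A).1 hA
  rw [Matrix.det_eq_sign_charpoly_coeff, h, mul_zero] at hdet
  exact not_isUnit_zero hdet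

/-- Divisibility by a power from a bound on multiplicities. -/
lemma dvd_pow_of_count_le {F : Type*} [Field F] [DecidableEq F] {g h : F[X]} {p : ℕ}
    (hg : g ≠ 0) (hh : h ≠ 0)
    (hdvd : ∀ f ∈ normalizedFactors g, f ∣ h)
    (hcount : ∀ f ∈ normalizedFactors g, (normalizedFactors g).count f ≤ p) :
    g ∣ h ^ p := by
  rw [dvd_iff_normalizedFactors_le_normalizedFactors hg (pow_ne_zero _ hh),
    normalizedFactors_pow, Multiset.le_iff_count]
  intro f
  by_cases hf : f ∈ normalizedFactors g
  · have hmem : f ∈ normalizedFactors h :=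
      (mem_normalizedFactors_iff' hh).2
        ⟨irreducible_of_normalized_factor f hf, normalize_normalized_factor f hf, hdvd f hf⟩
    rw [Multiset.count_nsmul]
    exact (hcount f hf).trans (Nat.le_mul_of_pos_right p (Multiset.count_pos.2 hmem))
  · rw [Multiset.count_eq_zero_of_notMem hf]
    exact Nat.zero_le _

/-- Let `F = 𝔽_q` be a finite field with `q` elements of characteristic `p`, `A`
an invertible `k × k` matrix over `F`, and let `Q` be the least common multiple of the numbers
`q ^ α - 1` as `α` ranges over the degrees of the distinct irreducible factors of the
characteristic polynomial of `A`.  Assume each irreducible factor of the characteristic polynomial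
occurs with multiplicity at most `p`.  Then `A ^ (Q * p) = 1`; equivalently, every solution of
`v_{n+1} = A v_n` over `F` is `Q p`-periodic. -/
theorem stmt4 (F : Type*) [Field F] [Fintype F] (p : ℕ) [CharP F p] (k : ℕ) [DecidableEq F]
    (A : Matrix (Fin k) (Fin k) F) (hA : IsUnit A)
    (hmult : ∀ f ∈ (normalizedFactors (Matrix.charpoly A)).toFinset,
        (normalizedFactors (Matrix.charpoly A)).count f ≤ p)
    (Q : ℕ)
    (hQ : Q = ((normalizedFactors (Matrix.charpoly A)).toFinset.image
        Polynomial.natDegree).lcm (fun α => Fintype.card F ^ α - 1)) :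
    A ^ (Q * p) = 1 ∧
      ∀ v : ℕ → (Fin k → F), (∀ n, v (n + 1) = A.mulVec (v n)) →
        ∀ n, v (n + Q * p) = v n := by
  have hpow : A ^ (Q * p) = 1 := by
    rcases Nat.eq_zero_or_pos Q with h0 | hpos
    · rw [h0, zero_mul, pow_zero]
    have hp : p.Prime := CharP.char_is_prime F p
    have : Fact p.Prime := ⟨hp⟩
    have hchi : A.charpoly ∣ (X ^ Q - 1) ^ p := by
      refine dvd_pow_of_count_le A.charpoly_monic.ne_zero ?_ ?_
        (fun f hf => hmult f (Multiset.mem_toFinset.2 hf))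
      · simpa using X_pow_sub_C_ne_zero hpos (1 : F)
      · intro f hf
        have hX : ¬ X ∣ f := fun h =>
          not_X_dvd_charpoly hA (h.trans (dvd_of_mem_normalizedFactors hf))
        have hdeg : Fintype.card F ^ f.natDegree - 1 ∣ Q := by
          rw [hQ]
          exact Finset.dvd_lcm (f := fun α => Fintype.card F ^ α - 1)
            (Finset.mem_image_of_mem _ (Multiset.mem_toFinset.2 hf))
        obtain ⟨m, hm⟩ := hdeg
        refine (irreducible_dvd_X_pow_sub_one (irreducible_of_normalized_factor f hf) hX).trans ?_
        rw [hm, pow_mul]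
        exact sub_one_dvd_pow_sub_one _ m
    rw [sub_pow_char, one_pow, ← pow_mul] at hchi
    obtain ⟨g, hg⟩ := hchi
    have h := congrArg (aeval A) hg
    rw [map_mul, Matrix.aeval_self_charpoly, zero_mul] at h
    simpa [sub_eq_zero] using h
  refine ⟨hpow, fun v hv n => ?_⟩
  have hiter : ∀ m, v (n + m) = (A ^ m).mulVec (v n) := by
    intro m
    induction m with
    | zero => simp
    | succ m ih => rw [← add_assoc, hv, ih, Matrix.mulVec_mulVec, pow_succ']
  rw [hiter, hpow, Matrix.one_mulVec]
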